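/- Let K be a field and s, t distinct integers with s, t ≥ 3, and let α ∈ K \ {0} have multiplicative order greater than max{s, 2t(t−1)}. Then the proper amalgam along ℓ = {a, b, x, y, z} of the hoop matroid M(Γ(K, s, α)) and the loop matroid M(Δ(K, t, α)) is not representable over any field. -/

import Mathlib

open Set

/-- The rank (as an extended natural number) of a set `X` in a matroid `M`. -/
noncomputable def Matroid.erank' {α : Type*} (M : Matroid α) (X : Set α) : ℕ∞ :=
  ⨆ I ∈ {I : Set α | M.Indep I ∧ I ⊆ X}, I.encard

/-- The rank function of the proper amalgam of `M₁` and `M₂`. -/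
noncomputable def amalRank {α : Type*} (M₁ M₂ : Matroid α) (X : Set α) : ℕ∞ :=
  ⨅ Y ∈ {Y : Set α | X ⊆ Y ∧ Y ⊆ M₁.E ∪ M₂.E},
    M₁.erank' (Y ∩ M₁.E) + M₂.erank' (Y ∩ M₂.E) - M₁.erank' (Y ∩ (M₁.E ∩ M₂.E))

/-- `A` is the proper amalgam of `M₁` and `M₂`. -/
def IsProperAmalgam {α : Type*} (M₁ M₂ A : Matroid α) : Prop :=
  A.E = M₁.E ∪ M₂.E ∧ ∀ X ⊆ M₁.E ∪ M₂.E, A.erank' X = amalRank M₁ M₂ X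

/-- A matroid `M` is representable over a field `K`. -/
def RepOver (K : Type) [Field K] {α : Type*} (M : Matroid α) : Prop :=
  ∃ (ι : Type) (φ : α → (ι → K)),
    ∀ I : Set α, I ⊆ M.E → (M.Indep I ↔ LinearIndependent K (fun x : I => φ x.val))

/-- The common ground-set elements of the gain graphs `Γ(K, s, α)` (the hoop gain
graph) and `Δ(L, t, β)` (the loop gain graph) are `a, b, x, y, z`; in addition
`Γ` has loops `a_i` (`hloop`) and the parallel edges `x_i` (`hx`), `y_i` (`hy`),
while `Δ` has the extra edge `g`, loops `b_i` (`lloop`) and the parallel edges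
`e_i` (`le`), `f_i` (`lf`). -/
inductive AmalEdge (s t : ℕ) : Type
  | a | b | x | y | z | g
  | hloop (i : Fin (s - 1))
  | hx (i : Fin s)
  | hy (i : Fin s)
  | lloop (i : Fin (2 * t - 2))
  | le (i : Fin (2 * t - 1))
  | lf (i : Fin (2 * t - 1))
  deriving DecidableEq

/-- The edges of the hoop gain graph `Γ(K, s, α)`. -/
def inHoop {s t : ℕ} : AmalEdge s t → Prop
  | .g | .lloop _ | .le _ | .lf _ => False
  | _ => True

/-- The edges of the loop gain graph `Δ(L, t, β)`. -/
def inLoopGraph {s t : ℕ} : AmalEdge s t → Prop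
  | .hloop _ | .hx _ | .hy _ => False
  | _ => True

/-- The column of the matrix `D(G, σ)` corresponding to an edge oriented from
vertex `u` to vertex `v` with gain `γ`: entry `1` in row `u`, `-γ` in row `v`, zeros
elsewhere (for an unbalanced loop, `u = v` and the column is the standard basis
vector at `u`). -/
def col {K : Type*} [Field K] (u v : ℕ) (γ : K) : ℕ → K :=
  fun i => if i = u then 1 else if i = v then -γ else 0

/-- The columns of the matrix `D(Γ(K, s, α), σ)` of the hoop gain graph on vertices
`u₁, …, u_{s+1}` (indexed `0, …, s`): loops `a` at `u₁`, `b` at `u_{s+1}`, `a_i` at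
`u_i` (`2 ≤ i ≤ s`), all with gain `α`; edges `x_i` (gain `1`) and `y_i` (gain `α`)
from `u_i` to `u_{i+1}`; edges `x, y, z` from `u₁` to `u_{s+1}` with gains
`1, α^(s-1), α^s`. Edges not in `Γ` are sent to the zero vector. -/
def hoopVec (K : Type*) [Field K] (a : K) (s t : ℕ) : AmalEdge s t → ℕ → K
  | .a => col 0 0 a
  | .b => col s s a
  | .x => col 0 s 1
  | .y => col 0 s (a ^ (s - 1))
  | .z => col 0 s (a ^ s)
  | .hloop i => col ((i : ℕ) + 1) ((i : ℕ) + 1) a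
  | .hx i => col (i : ℕ) ((i : ℕ) + 1) 1
  | .hy i => col (i : ℕ) ((i : ℕ) + 1) a
  | _ => fun _ => 0

/-- The columns of the matrix `D(Δ(L, t, β), σ)` of the loop gain graph on vertices
`v₁, …, v_{2t}` (indexed `0, …, 2t-1`): loops `a` at `v₁`, `b` at `v_{2t}`, `b_i` at
`v_i` (`2 ≤ i ≤ 2t-1`), all with gain `β`; edges `e_i` (gain `1`) and `f_i` (gain
`β^(t-1)` for `1 ≤ i ≤ t` and `β^t` for `t+1 ≤ i ≤ 2t-1`) from `v_i` to `v_{i+1}`;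
edges `x, y, z, g` from `v₁` to `v_{2t}` with gains `1, β^(t-1), β^t, β^(t(t-1))`.
Edges not in `Δ` are sent to the zero vector. -/
def loopVec (K : Type*) [Field K] (b : K) (s t : ℕ) : AmalEdge s t → ℕ → K
  | .a => col 0 0 b
  | .b => col (2 * t - 1) (2 * t - 1) b
  | .x => col 0 (2 * t - 1) 1
  | .y => col 0 (2 * t - 1) (b ^ (t - 1))
  | .z => col 0 (2 * t - 1) (b ^ t)
  | .g => col 0 (2 * t - 1) (b ^ (t * (t - 1)))
  | .lloop i => col ((i : ℕ) + 1) ((i : ℕ) + 1) b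
  | .le i => col (i : ℕ) ((i : ℕ) + 1) 1
  | .lf i => col (i : ℕ) ((i : ℕ) + 1) (if (i : ℕ) < t then b ^ (t - 1) else b ^ t)
  | _ => fun _ => 0

/-- `M` is the hoop matroid `M(Γ(K, s, α))`: the gain-graphic matroid of the hoop
gain graph, realised as the column matroid of the matrix `D(Γ(K, s, α), σ)`. -/
def IsHoopMatroid (K : Type*) [Field K] (a : K) (s t : ℕ)
    (M : Matroid (AmalEdge s t)) : Prop :=
  M.E = {e | inHoop e} ∧
    ∀ I : Set (AmalEdge s t),
      M.Indep I ↔ I ⊆ {e | inHoop e} ∧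
        LinearIndependent K (fun x : I => hoopVec K a s t x.val)

/-- `M` is the loop matroid `M(Δ(L, t, β))`: the gain-graphic matroid of the loop
gain graph, realised as the column matroid of the matrix `D(Δ(L, t, β), σ)`. -/
def IsLoopMatroid (K : Type*) [Field K] (b : K) (s t : ℕ)
    (M : Matroid (AmalEdge s t)) : Prop :=
  M.E = {e | inLoopGraph e} ∧
    ∀ I : Set (AmalEdge s t),
      M.Indep I ↔ I ⊆ {e | inLoopGraph e} ∧
        LinearIndependent K (fun x : I => loopVec K b s t x.val)


lemma erank'_eq_eRk {α : Type*} (M : Matroid α) (X : Set α) : M.erank' X = M.eRk X := by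
  unfold Matroid.erank'
  apply le_antisymm
  · apply iSup₂_le
    intro I hI
    exact hI.1.encard_le_eRk_of_subset hI.2
  · obtain ⟨I, hI⟩ := M.exists_isBasis' X
    rw [← hI.encard_eq_eRk]
    exact le_iSup₂ (f := fun (I : Set α) (_ : I ∈ {I : Set α | M.Indep I ∧ I ⊆ X}) => I.encard)
      I ⟨hI.indep, hI.subset⟩

lemma erank'_congr {α : Type*} (M N : Matroid α) (X : Set α)
    (h : ∀ J ⊆ X, (M.Indep J ↔ N.Indep J)) : M.erank' X = N.erank' X := by
  unfold Matroid.erank'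
  have : {I : Set α | M.Indep I ∧ I ⊆ X} = {I : Set α | N.Indep I ∧ I ⊆ X} := by
    ext I
    constructor
    · rintro ⟨h1, h2⟩
      exact ⟨(h I h2).1 h1, h2⟩
    · rintro ⟨h1, h2⟩
      exact ⟨(h I h2).2 h1, h2⟩
  rw [this]

section amalgam
variable {α : Type*} (M₁ M₂ A : Matroid α)

lemma amal_left (hA : IsProperAmalgam M₁ M₂ A) (hfin : (M₁.E ∩ M₂.E).Finite)
    (hag : ∀ J ⊆ M₁.E ∩ M₂.E, (M₁.Indep J ↔ M₂.Indep J)) (X : Set α) (hX : X ⊆ M₁.E) :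
    A.eRk X = M₁.eRk X := by
  have hrk : ∀ Y, M₁.eRk (Y ∩ (M₁.E ∩ M₂.E)) = M₂.eRk (Y ∩ (M₁.E ∩ M₂.E)) := by
    intro Y
    rw [← erank'_eq_eRk, ← erank'_eq_eRk]
    exact erank'_congr _ _ _ fun J hJ => hag J (hJ.trans inter_subset_right)
  have hne : ∀ Y, M₁.eRk (Y ∩ (M₁.E ∩ M₂.E)) ≠ ⊤ := by
    intro Y h
    have := M₁.eRk_le_encard (Y ∩ (M₁.E ∩ M₂.E))
    rw [h, top_le_iff] at this
    exact Set.encard_ne_top_iff.2 (hfin.subset inter_subset_right) this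
  rw [← erank'_eq_eRk, hA.2 X (hX.trans subset_union_left)]
  unfold amalRank
  simp only [erank'_eq_eRk]
  apply le_antisymm
  · refine (iInf₂_le X ⟨Subset.rfl, hX.trans subset_union_left⟩).trans ?_
    have h2 : X ∩ M₂.E = X ∩ (M₁.E ∩ M₂.E) := by
      rw [← inter_assoc, inter_eq_left.2 hX]
    rw [h2, ← hrk, inter_eq_left.2 hX]
    exact tsub_le_iff_right.2 le_rfl
  · refine le_iInf₂ fun Y hY => ?_
    have h1 : M₁.eRk X ≤ M₁.eRk (Y ∩ M₁.E) := M₁.eRk_mono (subset_inter hY.1 hX)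
    have h2 : M₁.eRk (Y ∩ (M₁.E ∩ M₂.E)) ≤ M₂.eRk (Y ∩ M₂.E) := by
      rw [hrk]
      exact M₂.eRk_mono (inter_subset_inter_right _ inter_subset_right)
    exact ENat.le_sub_of_add_le_right (hne Y) (add_le_add h1 h2)

lemma amal_right (hA : IsProperAmalgam M₁ M₂ A) (hfin : (M₁.E ∩ M₂.E).Finite)
    (hag : ∀ J ⊆ M₁.E ∩ M₂.E, (M₁.Indep J ↔ M₂.Indep J)) (X : Set α) (hX : X ⊆ M₂.E) :
    A.eRk X = M₂.eRk X := by
  have hne : ∀ Y, M₁.eRk (Y ∩ (M₁.E ∩ M₂.E)) ≠ ⊤ := by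
    intro Y h
    have := M₁.eRk_le_encard (Y ∩ (M₁.E ∩ M₂.E))
    rw [h, top_le_iff] at this
    exact Set.encard_ne_top_iff.2 (hfin.subset inter_subset_right) this
  rw [← erank'_eq_eRk, hA.2 X (hX.trans subset_union_right)]
  unfold amalRank
  simp only [erank'_eq_eRk]
  apply le_antisymm
  · refine (iInf₂_le X ⟨Subset.rfl, hX.trans subset_union_right⟩).trans ?_
    have h2 : X ∩ M₁.E = X ∩ (M₁.E ∩ M₂.E) := by
      rw [inter_comm M₁.E, ← inter_assoc, inter_eq_left.2 hX]
    rw [h2, inter_eq_left.2 hX, add_comm]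
    exact tsub_le_iff_right.2 le_rfl
  · refine le_iInf₂ fun Y hY => ?_
    have h1 : M₂.eRk X ≤ M₂.eRk (Y ∩ M₂.E) := M₂.eRk_mono (subset_inter hY.1 hX)
    have h2 : M₁.eRk (Y ∩ (M₁.E ∩ M₂.E)) ≤ M₁.eRk (Y ∩ M₁.E) :=
      M₁.eRk_mono (inter_subset_inter_right _ inter_subset_left)
    refine ENat.le_sub_of_add_le_right (hne Y) ?_
    rw [add_comm (M₁.eRk (Y ∩ M₁.E))]
    exact add_le_add h1 h2

end amalgam

/-- `u` is a nonzero multiple of `P - r Q` with `r ≠ 0`. -/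
def IsEdge {F V : Type*} [Field F] [AddCommGroup V] [Module F V] (P Q u : V) (r : F) : Prop :=
  r ≠ 0 ∧ ∃ c : F, c ≠ 0 ∧ u = c • (P - r • Q)

lemma cycle_indep {F V : Type*} [Field F] [AddCommGroup V] [Module F V] (n : ℕ)
    (P : Fin (n + 1) → V) (hP : LinearIndependent F P) (W : Fin n → V) (ρ : ℕ → F)
    (hW : ∀ i : Fin n, IsEdge (P i.castSucc) (P i.succ) (W i) (ρ i)) (c : V) (r : F)
    (hc : IsEdge (P 0) (P (Fin.last n)) c r) :
    LinearIndependent F (fun o : Option (Fin n) => o.elim c W) ↔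
      ∏ i ∈ Finset.range n, ρ i ≠ r := by
  choose hρ d hd hWd using hW
  obtain ⟨hr, e, he, hce⟩ := hc
  -- a linear relation among the columns
  have key : ∀ g : Option (Fin n) → F, (∑ o, g o • o.elim c W = 0) ↔
      ∀ j : Fin (n + 1), (Fin.snoc (α := fun _ => F) (fun i => g (some i) * d i) (-(g none * e * r)) : Fin (n + 1) → F) j
        = (Fin.cons (α := fun _ => F) (-(g none * e)) (fun i => g (some i) * d i * ρ i) : Fin (n + 1) → F) j := by
    intro g
    have h1 : ∑ o, g o • o.elim c W = ∑ j : Fin (n + 1),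
      ((Fin.snoc (α := fun _ => F) (fun i => g (some i) * d i) (-(g none * e * r)) : Fin (n + 1) → F) j
        - (Fin.cons (α := fun _ => F) (-(g none * e)) (fun i => g (some i) * d i * ρ i) : Fin (n + 1) → F) j) • P j := by
      simp only [sub_smul, Finset.sum_sub_distrib]
      rw [Fin.sum_univ_castSucc, Fin.sum_univ_succ
        (fun j => (Fin.cons (α := fun _ => F) (-(g none * e)) (fun i => g (some i) * d i * ρ i) : Fin (n + 1) → F) j • P j)]
      simp only [Fin.snoc_castSucc, Fin.snoc_last, Fin.cons_zero, Fin.cons_succ,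
        Fintype.sum_option, Option.elim, hWd, hce]
      simp only [smul_sub, smul_smul, Finset.sum_sub_distrib, neg_smul, mul_assoc]
      abel
    rw [h1]
    constructor
    · intro h j
      exact sub_eq_zero.1 (Fintype.linearIndependent_iff.1 hP _ h j)
    · intro h
      exact Finset.sum_eq_zero fun j _ => by rw [h j, sub_self, zero_smul]
  rw [Fintype.linearIndependent_iff]
  constructor
  · intro hLI hprod
    have := hLI (fun o => o.elim (-(e⁻¹)) fun i => (d i)⁻¹ * ∏ k ∈ Finset.range i, ρ k) (by
      rw [key]
      have hr2 : ∀ i : Fin n, (d i)⁻¹ * (∏ k ∈ Finset.range i, ρ k) * d i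
          = ∏ k ∈ Finset.range i, ρ k := fun i => by
        have := hd i
        field_simp
      simp only [Option.elim, hr2]
      intro j
      have hl : (Fin.snoc (α := fun _ => F) (fun i : Fin n => ∏ k ∈ Finset.range i, ρ k)
          (-(-e⁻¹ * e * r)) : Fin (n + 1) → F) j = ∏ k ∈ Finset.range j, ρ k := by
        refine Fin.lastCases ?_ (fun i => ?_) j
        · simp [hprod, he]
        · simp
      rw [hl]
      refine Fin.cases ?_ (fun i => ?_) j
      · simp [he]
      · simp [Finset.prod_range_succ]) none
    simp [he] at this
  · intro hne g hg
    rw [key] at hg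
    have hind : ∀ j : Fin (n + 1), (Fin.snoc (α := fun _ => F) (fun i => g (some i) * d i)
        (-(g none * e * r)) : Fin (n + 1) → F) j = -(g none * e) * ∏ k ∈ Finset.range j, ρ k := by
      intro j
      induction j using Fin.induction with
      | zero => rw [hg]; simp
      | succ i ih =>
        rw [hg, Fin.cons_succ]
        rw [Fin.snoc_castSucc] at ih
        rw [ih, Fin.val_succ, Finset.prod_range_succ, Fin.val_castSucc, mul_assoc]
    have h0 : g none = 0 := by
      have := hind (Fin.last n)
      rw [Fin.snoc_last, Fin.val_last] at this
      have h2 : g none * e * (∏ i ∈ Finset.range n, ρ i - r) = 0 := by linear_combination this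
      rcases mul_eq_zero.1 h2 with h | h
      · exact (mul_eq_zero.1 h).resolve_right he
      · exact absurd (sub_eq_zero.1 h) hne
    intro o
    cases o with
    | none => exact h0
    | some i =>
      have := hind i.castSucc
      rw [Fin.snoc_castSucc, h0] at this
      simp only [zero_mul, neg_zero] at this
      exact (mul_eq_zero.1 this).resolve_right (hd i)

/-- Linear independence of subfamilies of `G` agrees for the two vector families. -/
def Transfer {E : Type} (K : Type) {V : Type} (L : Type) {V' : Type} [Field K] [AddCommGroup V]
    [Module K V] [Field L] [AddCommGroup V'] [Module L V'] (v : E → V) (w : E → V')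
    (G : Set E) : Prop :=
  ∀ (κ : Type) [Finite κ] (f : κ → E), Function.Injective f → (∀ k, f k ∈ G) →
    (LinearIndependent K (v ∘ f) ↔ LinearIndependent L (w ∘ f))

section chain
variable {E : Type} {K V L V' : Type} [Field K] [AddCommGroup V]
    [Module K V] [Field L] [AddCommGroup V'] [Module L V'] {v : E → V} {w : E → V'} {G : Set E}

lemma not_pair_of_smul {x y : V'} (c : L) (h : y = c • x) : ¬ LinearIndependent L ![x, y] := by
  rw [LinearIndependent.pair_iff]
  intro h2
  have := h2 (-c) 1 (by rw [h]; simp)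
  simp at this

lemma edge_tr (T : Transfer K L v w G) (p q u : E) (hp : p ∈ G) (hq : q ∈ G) (hu : u ∈ G)
    (hpq : p ≠ q) (hpu : p ≠ u) (hqu : q ≠ u) (hI : LinearIndependent K ![v p, v q]) (r : K)
    (hE : IsEdge (v p) (v q) (v u) r) : ∃ r' : L, IsEdge (w p) (w q) (w u) r' := by
  have T2 : ∀ a b : E, a ∈ G → b ∈ G → a ≠ b →
      (LinearIndependent K ![v a, v b] ↔ LinearIndependent L ![w a, w b]) := by
    intro a b ha hb hab
    have := T (Fin 2) ![a, b] (by
      intro i j; fin_cases i <;> fin_cases j <;> simp [hab, hab.symm]) (by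
      intro i; fin_cases i <;> simp [ha, hb])
    have e1 : v ∘ ![a, b] = ![v a, v b] := by ext i; fin_cases i <;> rfl
    have e2 : w ∘ ![a, b] = ![w a, w b] := by ext i; fin_cases i <;> rfl
    rwa [e1, e2] at this
  have T3 : LinearIndependent K ![v u, v p, v q] ↔ LinearIndependent L ![w u, w p, w q] := by
    have := T (Fin 3) ![u, p, q] (by
      intro i j
      fin_cases i <;> fin_cases j <;> simp [hpq, hpu, hqu, hpq.symm, hpu.symm, hqu.symm]) (by
      intro i; fin_cases i <;> simp [hp, hq, hu])
    have e1 : v ∘ ![u, p, q] = ![v u, v p, v q] := by ext i; fin_cases i <;> rfl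
    have e2 : w ∘ ![u, p, q] = ![w u, w p, w q] := by ext i; fin_cases i <;> rfl
    rwa [e1, e2] at this
  obtain ⟨hr, c, hc, huc⟩ := hE
  have hI0 := LinearIndependent.pair_iff.1 hI
  have hIL := (T2 p q hp hq hpq).1 hI
  have h3 : ¬ LinearIndependent K ![v u, v p, v q] := by
    have := linearIndependent_finCons (K := K) (x := v u) (v := ![v p, v q])
    intro h
    refine (this.1 h).2 ?_
    rw [Matrix.range_cons, Matrix.range_cons, Matrix.range_empty, union_empty, singleton_union,
      Submodule.mem_span_pair]
    exact ⟨c, -(c * r), by rw [huc, smul_sub, smul_smul, neg_smul, sub_eq_add_neg]⟩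
  have h1 : LinearIndependent K ![v p, v u] := by
    rw [LinearIndependent.pair_iff]
    intro x y hxy
    have := hI0 (x + y * c) (-(y * c * r)) (by
      rw [← hxy, huc]; module)
    have hy : y = 0 := by
      have := this.2
      simpa [hc, hr] using this
    refine ⟨?_, hy⟩
    simpa [hy] using this.1
  have h2 : LinearIndependent K ![v q, v u] := by
    rw [LinearIndependent.pair_iff]
    intro x y hxy
    have := hI0 (y * c) (x -(y * c * r)) (by
      rw [← hxy, huc]; module)
    have hy : y = 0 := by
      have := this.1
      simpa [hc, hr] using this
    refine ⟨?_, hy⟩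
    simpa [hy] using this.2
  rw [T2 p u hp hu hpu] at h1
  rw [T2 q u hq hu hqu] at h2
  rw [T3] at h3
  have h4 : w u ∈ Submodule.span L (Set.range ![w p, w q]) := by
    by_contra hcon
    exact h3 ((linearIndependent_finCons (K := L) (x := w u) (v := ![w p, w q])).2 ⟨hIL, hcon⟩)
  rw [Matrix.range_cons, Matrix.range_cons, Matrix.range_empty, union_empty, singleton_union,
      Submodule.mem_span_pair] at h4
  obtain ⟨x, y, hxy⟩ := h4
  have hx : x ≠ 0 := by
    rintro rfl
    exact not_pair_of_smul y (by rw [← hxy]; simp) h2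
  have hy : y ≠ 0 := by
    rintro rfl
    exact not_pair_of_smul x (by rw [← hxy]; simp) h1
  refine ⟨-(y / x), by simp [hx, hy], x, hx, ?_⟩
  rw [← hxy, smul_sub, smul_smul]
  have : x * -(y / x) = -y := by field_simp
  rw [this, neg_smul, sub_neg_eq_add]

/-- A path `p 0, …, p n` of joints with parallel edges `e i` (gain `1`) and `f i` (gain `κ i`). -/
structure Chain (K : Type) {V : Type} [Field K] [AddCommGroup V] [Module K V] (v : E → V)
    (G : Set E) (n : ℕ) (p : Fin (n + 1) → E) (e f : Fin n → E) (κ : ℕ → K) : Prop where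
  pinj : Function.Injective p
  pG : ∀ i, p i ∈ G
  eG : ∀ i, e i ∈ G
  fG : ∀ i, f i ∈ G
  einj : Function.Injective e
  finj : Function.Injective f
  ef : ∀ i j, e i ≠ f j
  pe : ∀ i j, p i ≠ e j
  pf : ∀ i j, p i ≠ f j
  li : LinearIndependent K (v ∘ p)
  he : ∀ i : Fin n, IsEdge (v (p i.castSucc)) (v (p i.succ)) (v (e i)) (1 : K)
  hf : ∀ i : Fin n, IsEdge (v (p i.castSucc)) (v (p i.succ)) (v (f i)) (κ i)

lemma pair_li {n : ℕ} {p : Fin n → E} (h : LinearIndependent K (v ∘ p)) (i j : Fin n)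
    (hij : i ≠ j) : LinearIndependent K ![v (p i), v (p j)] := by
  have := h.comp ![i, j] (by
    intro a b; fin_cases a <;> fin_cases b <;> simp [hij, hij.symm])
  have e1 : (v ∘ p) ∘ ![i, j] = ![v (p i), v (p j)] := by ext i; fin_cases i <;> rfl
  rwa [e1] at this

lemma chain_tr (T : Transfer K L v w G) {n : ℕ} {p : Fin (n + 1) → E} {e f : Fin n → E}
    {κ : ℕ → K} (C : Chain K v G n p e f κ) :
    ∃ (b : ℕ → L) (B : L), B ≠ 0 ∧ ∀ (c : E) (rK : K) (rL : L), c ∈ G →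
      (∀ i, c ≠ e i) → (∀ i, c ≠ f i) →
      IsEdge (v (p 0)) (v (p (Fin.last n))) (v c) rK →
      IsEdge (w (p 0)) (w (p (Fin.last n))) (w c) rL → ∀ S ⊆ Finset.range n,
      (∏ i ∈ S, κ i = rK ↔ B * ∏ i ∈ S, b i = rL) := by
  classical
  have hcs : ∀ i : Fin n, i.castSucc ≠ i.succ := fun i => (Fin.castSucc_lt_succ).ne
  have h1 : ∀ i : Fin n, ∃ r : L, IsEdge (w (p i.castSucc)) (w (p i.succ)) (w (e i)) r :=
    fun i => edge_tr T _ _ _ (C.pG _) (C.pG _) (C.eG _) (C.pinj.ne (hcs i)) (C.pe _ _) (C.pe _ _)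
      (pair_li C.li _ _ (hcs i)) _ (C.he i)
  have h2 : ∀ i : Fin n, ∃ r : L, IsEdge (w (p i.castSucc)) (w (p i.succ)) (w (f i)) r :=
    fun i => edge_tr T _ _ _ (C.pG _) (C.pG _) (C.fG _) (C.pinj.ne (hcs i)) (C.pf _ _) (C.pf _ _)
      (pair_li C.li _ _ (hcs i)) _ (C.hf i)
  choose le' hle using h1
  choose lf' hlf using h2
  let le : ℕ → L := fun i => if h : i < n then le' ⟨i, h⟩ else 1
  let lf : ℕ → L := fun i => if h : i < n then lf' ⟨i, h⟩ else 1
  have hle2 : ∀ i : Fin n, le i = le' i := fun i => by simp [le]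
  have hlf2 : ∀ i : Fin n, lf i = lf' i := fun i => by simp [lf]
  have hle0 : ∀ i, le i ≠ 0 := by
    intro i
    by_cases h : i < n
    · simpa [le, h] using (hle ⟨i, h⟩).1
    · simp [le, h]
  refine ⟨fun i => lf i / le i, ∏ i ∈ Finset.range n, le i,
    Finset.prod_ne_zero_iff.2 fun i _ => hle0 i, ?_⟩
  intro c rK rL hcG hce hcf hcK hcL S hS
  let g : Fin n → E := fun i => if (i : ℕ) ∈ S then f i else e i
  have hginj : Function.Injective (fun o : Option (Fin n) => o.elim c g) := by
    rintro (_ | i) (_ | j) h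
    · rfl
    · exfalso
      simp only [Option.elim, g] at h
      split_ifs at h
      · exact hcf _ h
      · exact hce _ h
    · exfalso
      simp only [Option.elim, g] at h
      split_ifs at h
      · exact hcf _ h.symm
      · exact hce _ h.symm
    · simp only [Option.elim, g] at h
      split_ifs at h
      · exact congrArg _ (C.finj h)
      · exact absurd h.symm (C.ef _ _)
      · exact absurd h (C.ef _ _)
      · exact congrArg _ (C.einj h)
  have hgG : ∀ o : Option (Fin n), o.elim c g ∈ G := by
    rintro (_ | i)
    · exact hcG
    · simp only [Option.elim, g]
      split_ifs
      · exact C.fG i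
      · exact C.eG i
  have hT := T _ _ hginj hgG
  have e1 : v ∘ (fun o : Option (Fin n) => o.elim c g) = fun o => o.elim (v c) (v ∘ g) := by
    funext o; cases o <;> rfl
  have e2 : w ∘ (fun o : Option (Fin n) => o.elim c g) = fun o => o.elim (w c) (w ∘ g) := by
    funext o; cases o <;> rfl
  have hLI : LinearIndependent L (w ∘ p) := (T _ p C.pinj C.pG).1 C.li
  rw [e1, e2,
    cycle_indep n (v ∘ p) C.li (v ∘ g) (fun i => if i ∈ S then κ i else 1) (by
      intro i
      simp only [Function.comp, g]
      split_ifs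
      · exact C.hf i
      · exact C.he i) (v c) rK hcK,
    cycle_indep n (w ∘ p) hLI (w ∘ g) (fun i => if i ∈ S then lf i else le i) (by
      intro i
      simp only [Function.comp, g]
      split_ifs
      · rw [hlf2]; exact hlf i
      · rw [hle2]; exact hle i) (w c) rL hcL, not_iff_not] at hT
  rw [Finset.prod_ite_mem, Finset.inter_eq_right.2 hS] at hT
  rw [hT]
  have : ∏ i ∈ Finset.range n, (if i ∈ S then lf i else le i) =
      (∏ i ∈ Finset.range n, le i) * ∏ i ∈ S, lf i / le i := by
    have h5 : ∏ i ∈ S, lf i / le i = ∏ i ∈ Finset.range n, if i ∈ S then lf i / le i else 1 := by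
      rw [Finset.prod_ite_mem, Finset.inter_eq_right.2 hS]
    rw [h5, ← Finset.prod_mul_distrib]
    refine Finset.prod_congr rfl fun i _ => ?_
    have := hle0 i
    split_ifs
    · field_simp
    · simp
  rw [this]

end chain

lemma hoop_alg {K L : Type} [Field K] [Field L] (s : ℕ) (hs : 3 ≤ s) (a : K)
    (ho : ∀ k : ℕ, 1 ≤ k → k ≤ s → a ^ k ≠ 1) (b : ℕ → L) (B X Y Z : L) (hX0 : X ≠ 0)
    (hY0 : Y ≠ 0) (hZ0 : Z ≠ 0)
    (hX : ∀ S ⊆ Finset.range s, (∏ _i ∈ S, a = 1 ↔ B * ∏ i ∈ S, b i = X))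
    (hY : ∀ S ⊆ Finset.range s, (∏ _i ∈ S, a = a ^ (s - 1) ↔ B * ∏ i ∈ S, b i = Y))
    (hZ : ∀ S ⊆ Finset.range s, (∏ _i ∈ S, a = a ^ s ↔ B * ∏ i ∈ S, b i = Z)) :
    ∃ β : L, β ≠ 0 ∧ Y = X * β ^ (s - 1) ∧ Z = X * β ^ s ∧
      ∀ k, 1 ≤ k → k ≤ s → β ^ k ≠ 1 := by
  have h0 : B = X := by simpa using (hX ∅ (by simp))
  subst h0
  have hz : B * ∏ i ∈ Finset.range s, b i = Z := by
    rw [← hZ _ subset_rfl]; simp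
  have hb : ∀ j ∈ Finset.range s, b j = Z / Y := by
    intro j hj
    have hy : B * ∏ i ∈ (Finset.range s).erase j, b i = Y := by
      rw [← hY _ (Finset.erase_subset _ _)]
      rw [Finset.prod_const, Finset.card_erase_of_mem hj, Finset.card_range]
    rw [← Finset.mul_prod_erase _ _ hj] at hz
    rw [eq_div_iff hY0, ← hy, ← hz]
    ring
  have hpow : ∀ S ⊆ Finset.range s, ∏ i ∈ S, b i = (Z / Y) ^ S.card := by
    intro S hS
    rw [← Finset.prod_const]
    exact Finset.prod_congr rfl fun i hi => hb i (hS hi)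
  refine ⟨Z / Y, div_ne_zero hZ0 hY0, ?_, ?_, ?_⟩
  · have hsub : Finset.range (s - 1) ⊆ Finset.range s := Finset.range_mono (by omega)
    have := (hY _ hsub).1 (by simp)
    rw [hpow _ hsub, Finset.card_range] at this
    exact this.symm
  · rw [hpow _ subset_rfl, Finset.card_range] at hz
    exact hz.symm
  · intro k hk hks h1
    have hsub : Finset.range k ⊆ Finset.range s := Finset.range_mono hks
    have := (hX _ hsub).2 (by rw [hpow _ hsub, Finset.card_range, h1, mul_one])
    rw [Finset.prod_const, Finset.card_range] at this
    exact ho k hk hks this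

lemma loop_alg {K L : Type} [Field K] [Field L] (t : ℕ) (ht : 3 ≤ t) (a : K)
    (ho : ∀ k : ℕ, 1 ≤ k → k ≤ 2 * t * (t - 1) → a ^ k ≠ 1) (b : ℕ → L) (B X Y Z W : L)
    (hX0 : X ≠ 0) (κ : ℕ → K) (hκ : ∀ i, κ i = if i < t then a ^ (t - 1) else a ^ t)
    (hX : ∀ S ⊆ Finset.range (2 * t - 1), (∏ i ∈ S, κ i = 1 ↔ B * ∏ i ∈ S, b i = X))
    (hY : ∀ S ⊆ Finset.range (2 * t - 1), (∏ i ∈ S, κ i = a ^ (t - 1) ↔ B * ∏ i ∈ S, b i = Y))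
    (hZ : ∀ S ⊆ Finset.range (2 * t - 1), (∏ i ∈ S, κ i = a ^ t ↔ B * ∏ i ∈ S, b i = Z))
    (hW : ∀ S ⊆ Finset.range (2 * t - 1),
      (∏ i ∈ S, κ i = a ^ (t * (t - 1)) ↔ B * ∏ i ∈ S, b i = W)) :
    (Y / X) ^ t = (Z / X) ^ (t - 1) ∧ ∀ k, 1 ≤ k → k ≤ t → (Y / X) ^ k ≠ 1 := by
  have h0 : B = X := by simpa using (hX ∅ (by simp))
  subst h0
  have hby : ∀ j < t, b j = Y / B := by
    intro j hj
    have := (hY {j} (by simp; omega)).1 (by simp [hκ, hj])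
    rw [Finset.prod_singleton] at this
    rw [← this]; field_simp
  have hbz : ∀ j, t ≤ j → j < 2 * t - 1 → b j = Z / B := by
    intro j hj hj2
    have := (hZ {j} (by simp; omega)).1 (by simp [hκ, hj.not_gt])
    rw [Finset.prod_singleton] at this
    rw [← this]; field_simp
  have hp1 : ∀ k ≤ t, ∏ i ∈ Finset.range k, b i = (Y / B) ^ k := by
    intro k hk
    rw [Finset.prod_congr rfl fun i hi => hby i (by simp at hi; omega), Finset.prod_const,
      Finset.card_range]
  have hκ1 : ∀ k ≤ t, ∏ i ∈ Finset.range k, κ i = a ^ ((t - 1) * k) := by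
    intro k hk
    rw [Finset.prod_congr rfl fun i hi => (hκ i).trans (if_pos (by simp at hi; omega)),
      Finset.prod_const, Finset.card_range, pow_mul]
  have hsub : ∀ k ≤ t, Finset.range k ⊆ Finset.range (2 * t - 1) := fun k hk =>
    Finset.range_mono (by omega)
  constructor
  · have w1 := (hW _ (hsub t le_rfl)).1 (by rw [hκ1 _ le_rfl, mul_comm])
    have w2 := (hW (Finset.Ico t (2 * t - 1)) (by intro i; simp)).1 (by
      rw [Finset.prod_congr rfl fun i hi => (hκ i).trans (if_neg (by simp at hi; omega)),
        Finset.prod_const, Nat.card_Ico, ← pow_mul, show 2 * t - 1 - t = t - 1 by omega])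
    rw [hp1 _ le_rfl] at w1
    rw [Finset.prod_congr rfl fun i hi => hbz i (by simp at hi; omega) (by simp at hi; omega),
        Finset.prod_const, Nat.card_Ico, show 2 * t - 1 - t = t - 1 by omega, ← w1] at w2
    exact (mul_left_cancel₀ hX0 w2).symm
  · intro k hk hkt h1
    have := (hX _ (hsub k hkt)).2 (by rw [hp1 _ hkt, h1, mul_one])
    rw [hκ1 _ hkt] at this
    refine ho _ ?_ ?_ this
    · exact Nat.mul_pos (by omega) hk
    · calc (t - 1) * k ≤ (t - 1) * (2 * t) := Nat.mul_le_mul_left _ (by omega)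
        _ = _ := by ring

lemma final_alg {L : Type} [Field L] (s t : ℕ) (hs : 3 ≤ s) (ht : 3 ≤ t) (hst : s ≠ t)
    (X Y Z β : L) (hX : X ≠ 0) (hβ : β ≠ 0) (hY : Y = X * β ^ (s - 1)) (hZ : Z = X * β ^ s)
    (h1 : ∀ k, 1 ≤ k → k ≤ s → β ^ k ≠ 1) (h2 : (Y / X) ^ t = (Z / X) ^ (t - 1))
    (h3 : ∀ k, 1 ≤ k → k ≤ t → (Y / X) ^ k ≠ 1) : False := by
  rw [hY, mul_div_cancel_left₀ _ hX] at h2 h3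
  rw [hZ, mul_div_cancel_left₀ _ hX, ← pow_mul, ← pow_mul] at h2
  obtain ⟨s, rfl⟩ : ∃ m, s = m + 1 := ⟨s - 1, by omega⟩
  obtain ⟨t, rfl⟩ : ∃ m, t = m + 1 := ⟨t - 1, by omega⟩
  simp only [Nat.add_sub_cancel] at *
  have h4 : β ^ s = β ^ t := by
    have hne : β ^ (s * t) ≠ 0 := pow_ne_zero _ hβ
    apply mul_left_cancel₀ hne
    rw [← pow_add, ← pow_add]
    convert h2 using 2 <;> ring
  rcases lt_or_gt_of_ne hst with h | h
  · have hk : β ^ (t - s) = 1 := by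
      apply mul_left_cancel₀ (pow_ne_zero s hβ)
      rw [← pow_add, mul_one, h4]; congr 1; omega
    refine h3 (t - s) (by omega) (by omega) ?_
    rw [pow_right_comm, hk, one_pow]
  · have hk : β ^ (s - t) = 1 := by
      apply mul_left_cancel₀ (pow_ne_zero t hβ)
      rw [← pow_add, mul_one, ← h4]; congr 1; omega
    exact h1 (s - t) (by omega) (by omega) hk

section concrete

lemma indep_of_eRk {α : Type*} (M N : Matroid α) (X : Set α) (hX : X.Finite)
    (h : M.eRk X = N.eRk X) : M.Indep X ↔ N.Indep X := by
  rw [Matroid.indep_iff_eRk_eq_encard_of_finite hX, Matroid.indep_iff_eRk_eq_encard_of_finite hX, h]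

lemma transfer_of {E : Type} {K L V V' : Type} [Field K] [AddCommGroup V]
    [Module K V] [Field L] [AddCommGroup V'] [Module L V'] (v : E → V) (w : E → V')
    (G : Set E) (M A : Matroid E)
    (hM : ∀ I ⊆ G, (M.Indep I ↔ LinearIndependent K (fun x : I => v x.val)))
    (hA : ∀ I ⊆ G, (A.Indep I ↔ LinearIndependent L (fun x : I => w x.val)))
    (hr : ∀ X ⊆ G, A.eRk X = M.eRk X) : Transfer K L v w G := by
  intro κ _ f hf hG
  have hsub : Set.range f ⊆ G := by rintro _ ⟨k, rfl⟩; exact hG k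
  rw [linearIndependent_equiv' (Equiv.ofInjective f hf) (f := fun x : Set.range f => v x.val)
      (by rfl),
    linearIndependent_equiv' (Equiv.ofInjective f hf) (f := fun x : Set.range f => w x.val)
      (by rfl), ← hM _ hsub, ← hA _ hsub]
  exact indep_of_eRk _ _ _ (Set.finite_range f) (hr _ hsub).symm

lemma col_self {K : Type*} [Field K] (u : ℕ) (γ : K) : col u u γ = Pi.single u (1 : K) := by
  funext i
  by_cases h : i = u
  · subst h; simp [col]
  · simp [col, h]

lemma col_ne {K : Type*} [Field K] (u v : ℕ) (γ : K) (h : u ≠ v) :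
    col u v γ = Pi.single u (1 : K) - γ • Pi.single v (1 : K) := by
  funext i
  by_cases h1 : i = u
  · subst h1; simp [col, h]
  · by_cases h2 : i = v
    · subst h2; simp [col, h1]
    · simp [col, h1, h2]

lemma u2 {E K : Type} [Field K] (v : E → ℕ → K) (n : ℕ) (l : Set E)
    (hl : l.Finite) (hsupp : ∀ e ∈ l, v e ∈ Submodule.span K {Pi.single 0 (1 : K), Pi.single n 1})
    (hne : ∀ e ∈ l, v e ≠ 0)
    (hpair : ∀ e ∈ l, ∀ f ∈ l, e ≠ f → v e 0 * v f n - v e n * v f 0 ≠ 0) (J : Set E)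
    (hJ : J ⊆ l) : LinearIndependent K (fun x : J => v x.val) ↔ J.encard ≤ 2 := by
  classical
  constructor
  · intro h
    have hfin := hl.subset hJ
    haveI : Fintype J := hfin.fintype
    have h1 := linearIndependent_le_span_aux' _ h
      (({Pi.single 0 (1 : K), Pi.single n 1} : Finset (ℕ → K)) : Set (ℕ → K)) (by
        rintro _ ⟨x, rfl⟩
        have := hsupp x.val (hJ x.2)
        simpa using this)
    have h2 : Fintype.card
      ((({Pi.single 0 (1 : K), Pi.single n 1} : Finset (ℕ → K)) : Set (ℕ → K))) ≤ 2 := by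
      simp only [Finset.coe_sort_coe, Fintype.card_coe]
      exact Finset.card_le_two
    rw [← Set.coe_fintypeCard]
    exact_mod_cast h1.trans h2
  · intro h
    change LinearIndepOn K v J
    rcases h.lt_or_eq with h | h
    · have h1 : J.encard ≤ 1 := ENat.lt_add_one_iff (by simp) |>.1 (by simpa [one_add_one_eq_two] using h)
      rcases Set.encard_le_one_iff_eq.1 h1 with rfl | ⟨e, rfl⟩
      · exact linearIndepOn_empty _ _
      · exact (linearIndepOn_singleton_iff _).2 (hne e (hJ rfl))
    · obtain ⟨e, f, hef, rfl⟩ := Set.encard_eq_two.1 h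
      rw [LinearIndepOn.pair_iff _ hef]
      intro c d hcd
      have hp := hpair e (hJ (by simp)) f (hJ (by simp)) hef
      have h0 := congrFun hcd 0
      have h1 := congrFun hcd n
      simp only [Pi.add_apply, Pi.smul_apply, smul_eq_mul, Pi.zero_apply] at h0 h1
      constructor
      · apply (mul_eq_zero.1 (_ : c * (v e 0 * v f n - v e n * v f 0) = 0)).resolve_right hp
        linear_combination v f n * h0 - v f 0 * h1
      · apply (mul_eq_zero.1 (_ : d * (v e 0 * v f n - v e n * v f 0) = 0)).resolve_right hp
        linear_combination v e 0 * h1 - v e n * h0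

variable {s t : ℕ}

/-- The common line. -/
def ell (s t : ℕ) : Set (AmalEdge s t) := {.a, .b, .x, .y, .z}

lemma ell_eq : {e : AmalEdge s t | inHoop e} ∩ {e | inLoopGraph e} = ell s t := by
  ext e
  cases e <;> simp [inHoop, inLoopGraph, ell]

lemma line_u2 {K : Type} [Field K] (v : AmalEdge s t → ℕ → K) (n : ℕ) (hn : n ≠ 0) (a y z : K)
    (hy : y ≠ 0) (hz : z ≠ 0) (hy1 : y ≠ 1) (hz1 : z ≠ 1) (hyz : y ≠ z)
    (h1 : v .a = col 0 0 a) (h2 : v .b = col n n a) (h3 : v .x = col 0 n 1)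
    (h4 : v .y = col 0 n y) (h5 : v .z = col 0 n z) (J : Set (AmalEdge s t))
    (hJ : J ⊆ ell s t) : LinearIndependent K (fun x : J => v x.val) ↔ J.encard ≤ 2 := by
  have hn' : (0 : ℕ) ≠ n := hn.symm
  apply u2 v n (ell s t) _ _ _ _ J hJ
  · simp [ell]
  · intro e he
    rw [Submodule.mem_span_pair]
    simp only [ell, mem_insert_iff, mem_singleton_iff] at he
    rcases he with rfl | rfl | rfl | rfl | rfl
    · exact ⟨1, 0, by rw [h1, col_self]; simp⟩
    · exact ⟨0, 1, by rw [h2, col_self]; simp⟩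
    · exact ⟨1, -1, by rw [h3, col_ne _ _ _ hn']; module⟩
    · exact ⟨1, -y, by rw [h4, col_ne _ _ _ hn']; module⟩
    · exact ⟨1, -z, by rw [h5, col_ne _ _ _ hn']; module⟩
  · intro e he h0
    have e1 := congrFun h0 0
    have e2 := congrFun h0 n
    simp only [ell, mem_insert_iff, mem_singleton_iff] at he
    rcases he with rfl | rfl | rfl | rfl | rfl <;> simp_all [col]
  · intro e he f hf hef
    have k1 : ∀ p q : K, p ≠ q → -p + q ≠ 0 := by
      intro p q hpq h; exact hpq (by linear_combination -h)
    have k2 : ∀ p q : K, p ≠ q → -p - -q ≠ 0 := by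
      intro p q hpq h; exact hpq (by linear_combination -h)
    have k3 : ∀ p q : K, p ≠ q → p - q ≠ 0 := fun p q => sub_ne_zero.2
    simp only [ell, mem_insert_iff, mem_singleton_iff] at he hf
    rcases he with rfl | rfl | rfl | rfl | rfl <;> rcases hf with rfl | rfl | rfl | rfl | rfl <;>
      first
      | exact absurd rfl hef
      | (simp only [h1, h2, h3, h4, h5, col, hn, hn', if_true, if_false, ne_eq]
         intro hh
         first
         | exact one_ne_zero (α := K) (by linear_combination hh)
         | exact one_ne_zero (α := K) (by linear_combination -hh)
         | exact hy (by linear_combination hh)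
         | exact hy (by linear_combination -hh)
         | exact hz (by linear_combination hh)
         | exact hz (by linear_combination -hh)
         | exact hy1 (by linear_combination hh)
         | exact hy1 (by linear_combination -hh)
         | exact hz1 (by linear_combination hh)
         | exact hz1 (by linear_combination -hh)
         | exact hyz (by linear_combination hh)
         | exact hyz (by linear_combination -hh))

lemma li_single (K : Type) [Field K] (n : ℕ) :
    LinearIndependent K (fun i : Fin n => (Pi.single (i : ℕ) (1 : K) : ℕ → K)) :=
  (Pi.linearIndependent_single_one ℕ K).comp _ Fin.val_injective

/-- Joints of the hoop graph. -/
def hoopJ (s t : ℕ) : Fin (s + 1) → AmalEdge s t := fun i =>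
  if h0 : (i : ℕ) = 0 then .a else if h1 : (i : ℕ) = s then .b else
    .hloop ⟨(i : ℕ) - 1, by have := i.2; omega⟩

/-- Joints of the loop graph. -/
def loopJ (s t : ℕ) : Fin ((2 * t - 1) + 1) → AmalEdge s t := fun i =>
  if h0 : (i : ℕ) = 0 then .a else if h1 : (i : ℕ) = 2 * t - 1 then .b else
    .lloop ⟨(i : ℕ) - 1, by have := i.2; omega⟩

lemma hoopJ_vec (K : Type) [Field K] (a : K) (i : Fin (s + 1)) :
    hoopVec K a s t (hoopJ s t i) = Pi.single (i : ℕ) (1 : K) := by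
  unfold hoopJ
  split_ifs with h0 h1
  · rw [h0]; exact col_self _ _
  · rw [h1]; exact col_self _ _
  · have : (i : ℕ) - 1 + 1 = i := by omega
    simp only [hoopVec, this]; exact col_self _ _

lemma loopJ_vec (K : Type) [Field K] (a : K) (i : Fin ((2 * t - 1) + 1)) :
    loopVec K a s t (loopJ s t i) = Pi.single (i : ℕ) (1 : K) := by
  unfold loopJ
  split_ifs with h0 h1
  · rw [h0]; exact col_self _ _
  · rw [h1]; exact col_self _ _
  · have : (i : ℕ) - 1 + 1 = i := by omega
    simp only [loopVec, this]; exact col_self _ _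

lemma isEdge_col {K : Type} [Field K] (u v : ℕ) (γ : K) (h : u ≠ v) (hγ : γ ≠ 0) :
    IsEdge (Pi.single u (1 : K) : ℕ → K) (Pi.single v (1 : K)) (col u v γ) γ :=
  ⟨hγ, 1, one_ne_zero, by rw [one_smul, col_ne _ _ _ h]⟩

lemma hoop_chain (K : Type) [Field K] (a : K) (ha : a ≠ 0) :
    Chain K (hoopVec K a s t) {e | inHoop e} s (hoopJ s t) .hx .hy (fun _ => a) where
  pinj := by
    intro i j h
    have := congrArg (hoopVec K a s t) h
    rw [hoopJ_vec, hoopJ_vec] at this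
    exact (li_single K (s + 1)).injective this
  pG := by intro i; unfold hoopJ; split_ifs <;> simp [inHoop]
  eG := by intro i; simp [inHoop]
  fG := by intro i; simp [inHoop]
  einj := by intro i j h; simpa using h
  finj := by intro i j h; simpa using h
  ef := by intro i j; simp
  pe := by intro i j; unfold hoopJ; split_ifs <;> simp
  pf := by intro i j; unfold hoopJ; split_ifs <;> simp
  li := by
    have : hoopVec K a s t ∘ hoopJ s t = fun i : Fin (s + 1) => (Pi.single (i : ℕ) (1 : K) : ℕ → K) :=
      funext fun i => hoopJ_vec K a i
    rw [this]; exact li_single K _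
  he := by
    intro i
    rw [hoopJ_vec, hoopJ_vec]
    exact isEdge_col _ _ _ (by simp) one_ne_zero
  hf := by
    intro i
    rw [hoopJ_vec, hoopJ_vec]
    exact isEdge_col _ _ _ (by simp) ha

lemma loop_chain (K : Type) [Field K] (a : K) (ha : a ≠ 0) :
    Chain K (loopVec K a s t) {e | inLoopGraph e} (2 * t - 1) (loopJ s t) .le .lf
      (fun i => if i < t then a ^ (t - 1) else a ^ t) where
  pinj := by
    intro i j h
    have := congrArg (loopVec K a s t) h
    rw [loopJ_vec, loopJ_vec] at this
    exact (li_single K (2 * t - 1 + 1)).injective this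
  pG := by intro i; unfold loopJ; split_ifs <;> simp [inLoopGraph]
  eG := by intro i; simp [inLoopGraph]
  fG := by intro i; simp [inLoopGraph]
  einj := by intro i j h; simpa using h
  finj := by intro i j h; simpa using h
  ef := by intro i j; simp
  pe := by intro i j; unfold loopJ; split_ifs <;> simp
  pf := by intro i j; unfold loopJ; split_ifs <;> simp
  li := by
    have : loopVec K a s t ∘ loopJ s t =
        fun i : Fin (2 * t - 1 + 1) => (Pi.single (i : ℕ) (1 : K) : ℕ → K) :=
      funext fun i => loopJ_vec K a i
    rw [this]; exact li_single K _
  he := by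
    intro i
    rw [loopJ_vec, loopJ_vec]
    exact isEdge_col _ _ _ (by simp) one_ne_zero
  hf := by
    intro i
    rw [loopJ_vec, loopJ_vec]
    exact isEdge_col _ _ _ (by simp) (by split_ifs <;> exact pow_ne_zero _ ha)

end concrete

/-- Let `K` be a field and `s ≠ t` with `s, t ≥ 3`, and let `α ∈ K \ {0}` have
multiplicative order greater than `max {s, 2t(t-1)}`. Then the proper amalgam along
`ℓ = {a, b, x, y, z}` of the hoop matroid `M(Γ(K, s, α))` and the loop matroid
`M(Δ(K, t, α))` is not representable over any field. -/
theorem amalgam_not_representable (K : Type) [Field K] (s t : ℕ)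
    (hs : 3 ≤ s) (ht : 3 ≤ t) (hst : s ≠ t)
    (a : K) (ha : a ≠ 0)
    (horder : ∀ k : ℕ, 1 ≤ k → k ≤ max s (2 * t * (t - 1)) → a ^ k ≠ 1)
    (M₁ M₂ A : Matroid (AmalEdge s t))
    (hM₁ : IsHoopMatroid K a s t M₁)
    (hM₂ : IsLoopMatroid K a s t M₂)
    (hA : IsProperAmalgam M₁ M₂ A) :
    ¬ ∃ (L : Type) (_ : Field L), RepOver L A := by
  rintro ⟨L, _, ι, φ, hφ⟩
  obtain ⟨hE1, hI1⟩ := hM₁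
  obtain ⟨hE2, hI2⟩ := hM₂
  have hos : ∀ k : ℕ, 1 ≤ k → k ≤ s → a ^ k ≠ 1 := fun k h1 h2 => horder k h1 (le_max_of_le_left h2)
  have hot : ∀ k : ℕ, 1 ≤ k → k ≤ 2 * t * (t - 1) → a ^ k ≠ 1 :=
    fun k h1 h2 => horder k h1 (le_max_of_le_right h2)
  have ha1 : a ≠ 1 := by simpa using hos 1 le_rfl (by omega)
  have hsucc : ∀ m : ℕ, 1 ≤ m → a ^ (m - 1) ≠ a ^ m := by
    intro m hm h
    obtain ⟨m, rfl⟩ : ∃ k, m = k + 1 := ⟨m - 1, by omega⟩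
    rw [Nat.add_sub_cancel, pow_succ] at h
    exact ha1 (mul_left_cancel₀ (pow_ne_zero m ha) (by rw [← h, mul_one]))
  have htt : t ≤ 2 * t * (t - 1) := by
    calc t = t * 1 := by ring
      _ ≤ (2 * t) * (t - 1) := Nat.mul_le_mul (by omega) (by omega)
  have hell : M₁.E ∩ M₂.E = ell s t := by rw [hE1, hE2, ell_eq]
  have hfin : (M₁.E ∩ M₂.E).Finite := by rw [hell]; simp [ell]
  have hag : ∀ J ⊆ M₁.E ∩ M₂.E, (M₁.Indep J ↔ M₂.Indep J) := by
    intro J hJ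
    rw [hI1, hI2]
    have j1 : J ⊆ {e | inHoop e} := hE1 ▸ hJ.trans inter_subset_left
    have j2 : J ⊆ {e | inLoopGraph e} := hE2 ▸ hJ.trans inter_subset_right
    rw [hell] at hJ
    have q1 := line_u2 (hoopVec K a s t) s (by omega) a (a ^ (s - 1)) (a ^ s) (pow_ne_zero _ ha)
      (pow_ne_zero _ ha) (hos _ (by omega) (by omega)) (hos _ (by omega) le_rfl)
      (hsucc s (by omega)) rfl rfl rfl rfl rfl J hJ
    have q2 := line_u2 (loopVec K a s t) (2 * t - 1) (by omega) a (a ^ (t - 1)) (a ^ t)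
      (pow_ne_zero _ ha) (pow_ne_zero _ ha) (hot _ (by omega) (by omega))
      (hot _ (by omega) htt) (hsucc t (by omega)) rfl rfl rfl rfl rfl J hJ
    simp only [j1, j2, true_and, q1, q2]
  have T1 : Transfer K L (hoopVec K a s t) φ {e | inHoop e} := by
    apply transfer_of _ _ _ M₁ A
    · intro I hI
      rw [hI1]; simp only [hI, true_and]
    · intro I hI
      exact hφ I (by rw [hA.1, hE1]; exact hI.trans subset_union_left)
    · intro X hX
      exact amal_left M₁ M₂ A hA hfin hag X (hE1 ▸ hX)
  have T2 : Transfer K L (loopVec K a s t) φ {e | inLoopGraph e} := by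
    apply transfer_of _ _ _ M₂ A
    · intro I hI
      rw [hI2]; simp only [hI, true_and]
    · intro I hI
      exact hφ I (by rw [hA.1, hE2]; exact hI.trans subset_union_right)
    · intro X hX
      exact amal_right M₁ M₂ A hA hfin hag X (hE2 ▸ hX)
  have C1 := hoop_chain (s := s) (t := t) K a ha
  have C2 := loop_chain (s := s) (t := t) K a ha
  have s0 : hoopJ s t 0 = .a := by simp [hoopJ]
  have s1 : hoopJ s t (Fin.last s) = .b := by simp [hoopJ]; omega
  have t0 : loopJ s t 0 = .a := by simp [loopJ]
  have t1 : loopJ s t (Fin.last _) = .b := by simp [loopJ]; omega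
  have gs : ∀ (c : AmalEdge s t) (γ : K), γ ≠ 0 → hoopVec K a s t c = col 0 s γ →
      IsEdge (hoopVec K a s t .a) (hoopVec K a s t .b) (hoopVec K a s t c) γ := by
    intro c γ hγ h
    rw [h, ← s0, ← s1, hoopJ_vec, hoopJ_vec]
    exact isEdge_col _ _ _ (by simp; omega) hγ
  have gt : ∀ (c : AmalEdge s t) (γ : K), γ ≠ 0 → loopVec K a s t c = col 0 (2 * t - 1) γ →
      IsEdge (loopVec K a s t .a) (loopVec K a s t .b) (loopVec K a s t c) γ := by
    intro c γ hγ h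
    rw [h, ← t0, ← t1, loopJ_vec, loopJ_vec]
    exact isEdge_col _ _ _ (by simp; omega) hγ
  have liab := pair_li C2.li 0 (Fin.last _) (by
    intro h; have := congrArg Fin.val h; simp at this; omega)
  rw [t0, t1] at liab
  have ex : ∀ (c : AmalEdge s t) (γ : K), inLoopGraph c → AmalEdge.a ≠ c → AmalEdge.b ≠ c →
      γ ≠ 0 → loopVec K a s t c = col 0 (2 * t - 1) γ →
      ∃ r : L, IsEdge (φ .a) (φ .b) (φ c) r := by
    intro c γ hc h1 h2 hγ h
    exact edge_tr T2 .a .b c trivial trivial hc (by simp) h1 h2 liab γ (gt c γ hγ h)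
  obtain ⟨X, hX⟩ := ex .x 1 trivial (by simp) (by simp) one_ne_zero rfl
  obtain ⟨Y, hY⟩ := ex .y _ trivial (by simp) (by simp) (pow_ne_zero _ ha) rfl
  obtain ⟨Z, hZ⟩ := ex .z _ trivial (by simp) (by simp) (pow_ne_zero _ ha) rfl
  obtain ⟨W, hW⟩ := ex .g _ trivial (by simp) (by simp) (pow_ne_zero _ ha) rfl
  obtain ⟨b, B, -, hb⟩ := chain_tr T1 C1
  obtain ⟨d, D, -, hd⟩ := chain_tr T2 C2
  rw [s0, s1] at hb
  rw [t0, t1] at hd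
  obtain ⟨β, hβ0, hβ1, hβ2, hβ3⟩ := hoop_alg s hs a hos b B X Y Z hX.1 hY.1 hZ.1
    (hb .x 1 X trivial (by simp) (by simp) (gs _ _ one_ne_zero rfl) hX)
    (hb .y _ Y trivial (by simp) (by simp) (gs _ _ (pow_ne_zero _ ha) rfl) hY)
    (hb .z _ Z trivial (by simp) (by simp) (gs _ _ (pow_ne_zero _ ha) rfl) hZ)
  obtain ⟨h1, h2⟩ := loop_alg t ht a hot d D X Y Z W hX.1 _ (fun _ => rfl)
    (hd .x 1 X trivial (by simp) (by simp) (gt _ _ one_ne_zero rfl) hX)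
    (hd .y _ Y trivial (by simp) (by simp) (gt _ _ (pow_ne_zero _ ha) rfl) hY)
    (hd .z _ Z trivial (by simp) (by simp) (gt _ _ (pow_ne_zero _ ha) rfl) hZ)
    (hd .g _ W trivial (by simp) (by simp) (gt _ _ (pow_ne_zero _ ha) rfl) hW)
  exact final_alg s t hs ht hst X Y Z β hX.1 hβ0 hβ1 hβ2 hβ3 h1 h2
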